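/- Let n ≥ 1 and let A be the n×n complex matrix with A_{jj} = 1 for all j, A_{j,j+1} = 1 for j = 1,…,n−1, A_{n,1} = −1, and all other entries 0. Then the largest singular value of A (equivalently, the operator norm of A as a linear map on Euclidean ℂ^n) equals 2·cos(π/(2n)). -/

import Mathlib

open Matrix

/-- The `n × n` matrix of the chained CHSH semidefinite program: `1`'s on the main
diagonal and first superdiagonal, `-1` in the lower-left corner, `0` elsewhere. -/
def chainA (n : ℕ) : Matrix (Fin n) (Fin n) ℂ :=
  Matrix.of fun j k =>
    (if j = k then 1 else 0) + (if (k : ℕ) = (j : ℕ) + 1 then 1 else 0)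
      - (if (j : ℕ) = n - 1 ∧ (k : ℕ) = 0 then 1 else 0)

/-!
Write `A = 1 + S`, where `S` shifts coordinates cyclically and flips the sign of the one that wraps
around. `S` is unitary, and the geometric vectors `(1, z, …, z ^ (n - 1))` show that its spectrum
is the set of `n`-th roots of `-1`. Hence `A` is normal and `‖A‖` is the maximum of `‖1 + z‖` over
these roots. As `‖1 + exp (θ * I)‖ = 2 * |cos (θ / 2)|`, the maximum is attained at the roots
nearest to `1`, where `θ = ±π / n`.
-/

theorem norm_one_add_exp_mul_I (θ : ℝ) :
    ‖1 + Complex.exp (θ * Complex.I)‖ = 2 * |Real.cos (θ / 2)| := by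
  have hfactor : 1 + Complex.exp (θ * Complex.I) =
      Complex.exp ((θ / 2 : ℝ) * Complex.I) * (2 * Real.cos (θ / 2) : ℝ) := by
    push_cast
    rw [Complex.two_cos, mul_add, ← Complex.exp_add, ← Complex.exp_add, neg_mul, add_neg_cancel,
      Complex.exp_zero, ← add_mul, add_halves, add_comm]
  rw [hfactor, norm_mul, Complex.norm_exp_ofReal_mul_I, one_mul, Complex.norm_real,
    Real.norm_eq_abs, abs_mul, abs_two]

theorem norm_one_add_of_norm_eq_one {z : ℂ} (hz : ‖z‖ = 1) :
    ‖1 + z‖ = 2 * Real.cos (z.arg / 2) := by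
  have hz_exp : Complex.exp (z.arg * Complex.I) = z := by
    simpa [hz] using Complex.norm_mul_exp_arg_mul_I z
  have hcos : 0 ≤ Real.cos (z.arg / 2) :=
    Real.cos_nonneg_of_neg_pi_div_two_le_of_le
      (by linarith [Complex.neg_pi_lt_arg z]) (by linarith [Complex.arg_le_pi z])
  rw [← abs_of_nonneg hcos, ← norm_one_add_exp_mul_I, hz_exp]

theorem abs_arg_pow_le (z : ℂ) (n : ℕ) : |(z ^ n).arg| ≤ n * |z.arg| := by
  rcases lt_or_ge (n * |z.arg|) Real.pi with h | h
  · have hlt : |n * z.arg| < Real.pi := by rwa [abs_mul, Nat.abs_cast]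
    have harg : (z ^ n).arg = n * z.arg := by
      rw [← Complex.arg_coe_angle_toReal_eq_arg, Complex.arg_pow_coe_angle,
        ← Real.Angle.natCast_mul_eq_nsmul]
      exact Real.Angle.toReal_coe_eq_self_iff.mpr ⟨(abs_lt.mp hlt).1, (abs_lt.mp hlt).2.le⟩
    rw [harg, abs_mul, Nat.abs_cast]
  · exact (Complex.abs_arg_le_pi _).trans h

theorem norm_eq_one_of_pow_eq_neg_one {z : ℂ} {n : ℕ} (hz : z ^ n = -1) : ‖z‖ = 1 := by
  have hn : n ≠ 0 := by
    rintro rfl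
    norm_num at hz
  have hz_sq : z ^ (n * 2) = 1 := by rw [pow_mul, hz, neg_one_sq]
  exact Complex.norm_eq_one_of_pow_eq_one hz_sq (by positivity)

theorem pi_div_le_abs_arg_of_pow_eq_neg_one {z : ℂ} {n : ℕ} (hz : z ^ n = -1) :
    Real.pi / n ≤ |z.arg| := by
  have hpi : Real.pi ≤ n * |z.arg| := by
    simpa [hz, abs_of_pos Real.pi_pos] using abs_arg_pow_le z n
  exact div_le_of_le_mul₀ (by positivity) (abs_nonneg _) (by rwa [mul_comm])

theorem exp_pi_div_mul_I_pow {n : ℕ} (hn : n ≠ 0) :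
    Complex.exp ((Real.pi / n : ℝ) * Complex.I) ^ n = -1 := by
  rw [← Complex.exp_nat_mul, ← Complex.exp_pi_mul_I]
  congr 1
  push_cast
  field_simp

theorem isGreatest_norm_one_add_of_pow_eq_neg_one {n : ℕ} (hn : n ≠ 0) :
    IsGreatest ((fun z : ℂ => ‖1 + z‖) '' {z | z ^ n = -1})
      (2 * Real.cos (Real.pi / (2 * n))) := by
  have hhalf : Real.pi / (2 * n) = Real.pi / n / 2 := by ring
  have hle_pi : Real.pi / n ≤ Real.pi :=
    div_le_self Real.pi_pos.le (by exact_mod_cast Nat.one_le_iff_ne_zero.mpr hn)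
  rw [hhalf]
  constructor
  · refine ⟨_, exp_pi_div_mul_I_pow hn, ?_⟩
    have hpos : 0 ≤ Real.pi / n := by positivity
    simp only [norm_one_add_exp_mul_I]
    rw [abs_of_nonneg (Real.cos_nonneg_of_neg_pi_div_two_le_of_le
      (by linarith [Real.pi_pos]) (by linarith))]
  · rintro _ ⟨z, hz, rfl⟩
    have harg := pi_div_le_abs_arg_of_pow_eq_neg_one hz
    simp only [norm_one_add_of_norm_eq_one (norm_eq_one_of_pow_eq_neg_one hz)]
    rw [← Real.cos_abs (z.arg / 2), abs_div, abs_two]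
    gcongr
    exact Real.cos_le_cos_of_nonneg_of_le_pi (by positivity)
      (by linarith [Complex.abs_arg_le_pi z, Real.pi_pos]) (by linarith)

theorem isGreatest_norm_one_add_spectrum {A : Type*} [CStarAlgebra A] [Nontrivial A] (a : A)
    [IsStarNormal a] : IsGreatest ((fun z : ℂ => ‖1 + z‖) '' spectrum ℂ a) ‖1 + a‖ := by
  have hcfc : cfc (fun z : ℂ => 1 + z) a = 1 + a := by
    rw [cfc_const_add (1 : ℂ) (fun z => z) a, cfc_id' ℂ a, map_one]
  simpa only [hcfc] using IsGreatest.norm_cfc (fun z : ℂ => 1 + z) a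

section TwistedShift

/-- The twisted cyclic shift `(v₀, …, vₘ) ↦ (v₁, …, vₘ, c * v₀)`, given by its rows. The size is
written `m + 1` so that `Fin.snoc` can single out the last row. -/
def twistedShift {R : Type*} [Zero R] [One R] (m : ℕ) (c : R) :
    Matrix (Fin (m + 1)) (Fin (m + 1)) R :=
  Matrix.of (Fin.snoc (fun i => Pi.single i.succ 1) (Pi.single 0 c))

variable {R : Type*} {m : ℕ}

theorem twistedShift_castSucc [Zero R] [One R] (c : R) (i : Fin m) :
    twistedShift m c i.castSucc = Pi.single i.succ 1 := by
  ext k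
  simp only [twistedShift, Matrix.of_apply, Fin.snoc_castSucc]

theorem twistedShift_last [Zero R] [One R] (c : R) :
    twistedShift m c (Fin.last m) = Pi.single 0 c := by
  ext k
  simp only [twistedShift, Matrix.of_apply, Fin.snoc_last]

theorem twistedShift_mulVec_castSucc [NonAssocSemiring R] (c : R) (v : Fin (m + 1) → R)
    (i : Fin m) : (twistedShift m c *ᵥ v) i.castSucc = v i.succ := by
  rw [Matrix.mulVec, twistedShift_castSucc, single_one_dotProduct]

theorem twistedShift_mulVec_last [NonAssocSemiring R] (c : R) (v : Fin (m + 1) → R) :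
    (twistedShift m c *ᵥ v) (Fin.last m) = c * v 0 := by
  rw [Matrix.mulVec, twistedShift_last, single_dotProduct]

theorem twistedShift_mem_unitaryGroup [CommRing R] [StarRing R] {c : R} (hc : c ∈ unitary R) :
    twistedShift m c ∈ Matrix.unitaryGroup (Fin (m + 1)) R := by
  rw [Matrix.mem_unitaryGroup_iff]
  ext j k
  have hjk : (twistedShift m c * star (twistedShift m c)) j k =
      (twistedShift m c *ᵥ star (twistedShift m c k)) j := rfl
  rw [hjk]
  refine Fin.lastCases ?_ (fun i => ?_) j <;> refine Fin.lastCases ?_ (fun l => ?_) k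
  · simp [twistedShift_mulVec_last, twistedShift_last, Unitary.mul_star_self_of_mem hc]
  · simp [twistedShift_mulVec_last, twistedShift_castSucc, (Fin.castSucc_lt_last l).ne']
  · simp [twistedShift_mulVec_castSucc, twistedShift_last, (Fin.castSucc_lt_last i).ne]
  · simp [twistedShift_mulVec_castSucc, twistedShift_castSucc, Matrix.one_apply,
      Pi.single_apply]

theorem pow_eq_of_twistedShift_mulVec_eq_smul [Semiring R] [IsRightCancelMulZero R] {c z : R}
    {v : Fin (m + 1) → R} (hv : v ≠ 0) (h : twistedShift m c *ᵥ v = z • v) : z ^ (m + 1) = c := by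
  have hgeom (j : Fin (m + 1)) : v j = z ^ (j : ℕ) * v 0 := by
    induction j using Fin.induction with
    | zero => simp
    | succ i ih =>
      have hi := congrFun h i.castSucc
      rw [twistedShift_mulVec_castSucc, Pi.smul_apply, smul_eq_mul, ih] at hi
      rw [hi, Fin.val_succ, pow_succ', mul_assoc, Fin.val_castSucc]
  have hv0 : v 0 ≠ 0 := fun h0 => hv <| funext fun j => by simp [hgeom j, h0]
  have hlast := congrFun h (Fin.last m)
  rw [twistedShift_mulVec_last, Pi.smul_apply, smul_eq_mul, hgeom (Fin.last m), Fin.val_last,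
    ← mul_assoc, ← pow_succ'] at hlast
  exact (mul_right_cancel₀ hv0 hlast).symm

theorem twistedShift_mulVec_pow [Semiring R] {c z : R} (hz : z ^ (m + 1) = c) :
    twistedShift m c *ᵥ (fun j => z ^ (j : ℕ)) = z • fun j : Fin (m + 1) => z ^ (j : ℕ) := by
  ext j
  refine Fin.lastCases ?_ (fun i => ?_) j
  · simp [twistedShift_mulVec_last, ← hz, pow_succ']
  · simp [twistedShift_mulVec_castSucc, pow_succ']

theorem spectrum_twistedShift {K : Type*} [Field K] (m : ℕ) (c : K) :
    spectrum K (twistedShift m c) = {z | z ^ (m + 1) = c} := by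
  ext z
  rw [← Matrix.spectrum_toLin', ← Module.End.hasEigenvalue_iff_mem_spectrum]
  constructor
  · intro h
    obtain ⟨v, hv⟩ := h.exists_hasEigenvector
    exact pow_eq_of_twistedShift_mulVec_eq_smul hv.2 hv.apply_eq_smul
  · intro hz
    have hne : (fun j : Fin (m + 1) => z ^ (j : ℕ)) ≠ 0 := fun h => by simpa using congrFun h 0
    exact Module.End.hasEigenvalue_of_hasEigenvector (Module.End.hasEigenvector_iff.mpr
      ⟨Module.End.mem_eigenspace_iff.mpr (twistedShift_mulVec_pow hz), hne⟩)

end TwistedShift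

theorem chainA_succ (m : ℕ) : chainA (m + 1) = 1 + twistedShift m (-1) := by
  ext j k
  rw [Matrix.add_apply, Matrix.one_apply]
  refine Fin.lastCases ?_ (fun i => ?_) j
  · simp [chainA, twistedShift_last, Pi.single_apply, k.is_lt.ne, sub_eq_add_neg, neg_ite]
  · have hsucc : (k : ℕ) = i + 1 ↔ k = i.succ := by rw [Fin.ext_iff, Fin.val_succ]
    simp [chainA, twistedShift_castSucc, Pi.single_apply, hsucc, i.is_lt.ne]

open scoped Matrix.Norms.L2Operator in
theorem norm_one_add_twistedShift_neg_one (m : ℕ) :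
    ‖1 + twistedShift m (-1 : ℂ)‖ = 2 * Real.cos (Real.pi / (2 * (m + 1 : ℕ))) := by
  have : IsStarNormal (twistedShift m (-1 : ℂ)) :=
    isStarNormal_of_mem_unitary (twistedShift_mem_unitaryGroup (by simp [Unitary.mem_iff]))
  have hnorm := isGreatest_norm_one_add_spectrum (twistedShift m (-1 : ℂ))
  rw [spectrum_twistedShift] at hnorm
  exact hnorm.unique (isGreatest_norm_one_add_of_pow_eq_neg_one m.succ_ne_zero)

/-- The largest singular value of the chained CHSH matrix `A`, i.e. its operator norm as
a linear map on Euclidean `ℂ^n`, equals `2 cos (π / (2n))`. -/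
theorem chainA_opNorm (n : ℕ) (hn : 1 ≤ n) :
    ‖Matrix.toEuclideanCLM (𝕜 := ℂ) (chainA n)‖ = 2 * Real.cos (Real.pi / (2 * n)) := by
  obtain ⟨m, rfl⟩ := Nat.exists_eq_add_of_le' hn
  rw [chainA_succ, ← Matrix.cstar_norm_def]
  exact norm_one_add_twistedShift_neg_one m
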